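/- Let F be an algebraically closed field and r ≤ min(n,m). A polynomial f ∈ F[X] in the entries of an n×m matrix of variables vanishes on every n×m matrix over F of rank at most r−1 if and only if f lies in the ideal generated by the r×r minors of X. -/

import Mathlib

/-!
Polynomials vanishing on all matrices of rank `< r` are shown to be combinations of `r × r` minors
by a Gröbner-type argument that uses neither the straightening law nor radicality of the ideal.

Give the variable `X (i, j)` the weight `2ij`. By the rearrangement inequality the diagonal term of
a minor is the unique term of largest weight. Call a monomial *chain-free* if its support contains
no `(i₁, j₁), …, (iᵣ, jᵣ)` with both coordinates strictly increasing. A monomial that is not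
chain-free is divisible by the diagonal term of a minor, hence congruent, modulo the minors, to a
combination of monomials of smaller weight. So every polynomial is congruent to a combination of
chain-free monomials (`exists_reduction`).

It remains to see that a nonzero combination `q` of chain-free monomials does not vanish on all
matrices of rank `< r` (`eq_zero_of_chainFree`). Let `S` be the support of a monomial of largest
weight in `q`. Having no chain of length `r`, the set `S` is a union of `r - 1` antichains
(`exists_level`, the easy half of Mirsky's theorem). For one antichain `T` and prescribed nonzero
`c`, there is a matrix of rank at most one with entries `a i * b j * s ^ (-(α i + β j))` on the rows
and columns met by `T`, such that the entry is `c (i, j) * s ^ (-2ij)` on `T` and has a strictly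
smaller pole at `s = 0` off `T` (`exists_potential`). Summing over the antichains gives matrices
`A s` of rank `< r` for which `s ^ (2ij) * A s i j` is a polynomial in `s` with constant term
`c (i, j)` on `S` and `0` off `S` (`exists_family`). If `q` vanished at every `A s`, the coefficient
of the lowest power of `s` would show that the part of the top weight component of `q` supported on
`S` vanishes at `c`; since `F` is infinite, a suitable `c` excludes this.
-/

open MvPolynomial

namespace DetIdeal

/-- The determinantal ideal, generated by the `r × r` minors of the generic `n × m` matrix.
Rows and columns may be listed in any order, which changes a minor only by a sign. -/
noncomputable abbrev minorIdeal (F : Type*) [Field F] (n m r : ℕ) : Ideal (MvPolynomial (Fin n × Fin m) F) :=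
  Ideal.span { p : MvPolynomial (Fin n × Fin m) F |
        ∃ (R : Fin r ↪ Fin n) (C : Fin r ↪ Fin m),
          p = Matrix.det (Matrix.of fun i j => MvPolynomial.X (R i, C j)) }

/-- `S` contains `r` positions that strictly increase in both coordinates. -/
def HasChain {n m : ℕ} (r : ℕ) (S : Set (Fin n × Fin m)) : Prop :=
  ∃ (R : Fin r → Fin n) (C : Fin r → Fin m), StrictMono R ∧ StrictMono C ∧ ∀ i, (R i, C i) ∈ S

/-- The weight of a monomial, `X (i, j)` having weight `2ij` with indices starting at `0`. The factor
`2` leaves room for integer exponents in `exists_potential`. -/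
noncomputable def wt {n m : ℕ} : (Fin n × Fin m →₀ ℕ) →+ ℕ :=
  Finsupp.weight fun p => 2 * (p.1 : ℕ) * (p.2 : ℕ)

/-- The exponents of the chain-free monomials: those divisible by no diagonal term of an `r × r`
minor. -/
def chainFree (n m r : ℕ) : Set (Fin n × Fin m →₀ ℕ) :=
  {d | ¬ HasChain r (d.support : Set (Fin n × Fin m))}

/-! ### Minors vanish on matrices of small rank -/

theorem eval_eq_zero_of_mem {F : Type*} [Field F] {n m r : ℕ} (hr : 1 ≤ r)
    {f : MvPolynomial (Fin n × Fin m) F} (hf : f ∈ minorIdeal F n m r)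
    (A : Matrix (Fin n) (Fin m) F) (hA : A.rank ≤ r - 1) :
    eval (fun p : Fin n × Fin m => A p.1 p.2) f = 0 := by
  have hle : minorIdeal F n m r ≤
      RingHom.ker (eval (fun p : Fin n × Fin m => A p.1 p.2)) := by
    refine Ideal.span_le.2 ?_
    rintro _ ⟨R, C, rfl⟩
    rw [SetLike.mem_coe, RingHom.mem_ker, RingHom.map_det]
    have hsub : (eval (fun p : Fin n × Fin m => A p.1 p.2)).mapMatrix
        (Matrix.of fun i j => X (R i, C j)) = A.submatrix R C := by
      ext i j; simp
    rw [hsub]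
    by_contra h
    have h1 := Matrix.rank_of_isUnit _ ((Matrix.isUnit_iff_isUnit_det _).2 (isUnit_iff_ne_zero.2 h))
    have h2 := Matrix.rank_submatrix_le A R C
    simp only [Fintype.card_fin] at h1
    omega
  exact hle hf

/-! ### Reduction to chain-free monomials -/

/-- The diagonal term of a minor has strictly larger weight than every other term. -/
theorem weight_perm_lt {n m r : ℕ} {R : Fin r → Fin n} {C : Fin r → Fin m}
    (hR : StrictMono R) (hC : StrictMono C) {σ : Equiv.Perm (Fin r)} (hσ : σ ≠ 1) :
    ∑ i, wt (Finsupp.single (R (σ i), C i) 1) < ∑ i, wt (Finsupp.single (R i, C i) 1) := by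
  have hmono : Monovary (fun i => (R i : ℕ)) (fun i => (C i : ℕ)) := by
    intro i j hij
    exact hR.monotone (hC.lt_iff_lt.1 hij).le
  have key : ∑ i, (R (σ i) : ℕ) * (C i : ℕ) < ∑ i, (R i : ℕ) * (C i : ℕ) := by
    rw [hmono.sum_comp_perm_mul_lt_sum_mul_iff]
    intro h
    apply hσ
    have hm : Monotone σ := by
      intro i j hij
      rcases hij.eq_or_lt with rfl | hij
      · exact le_rfl
      · exact hR.le_iff_le.1 (h (hC hij))
    have hs : StrictMono σ := hm.strictMono_of_injective σ.injective
    ext i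
    have := Subsingleton.elim (hs.orderIsoOfSurjective σ σ.surjective) (OrderIso.refl _)
    exact congrArg Fin.val (DFunLike.congr_fun this i)
  simp only [wt, Finsupp.weight_single, smul_eq_mul, one_mul, mul_assoc, ← Finset.mul_sum]
  omega

/-- Every monomial is, modulo the minors, a combination of chain-free ones: replace the diagonal term
of a minor by the remaining terms, which have smaller weight. -/
theorem monomial_mem (F : Type*) [Field F] (n m r : ℕ) (d : Fin n × Fin m →₀ ℕ) :
    (monomial d (1 : F)) ∈
      (minorIdeal F n m r).restrictScalars F ⊔ restrictSupport F (chainFree n m r) := by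
  induction hk : wt d using Nat.strong_induction_on generalizing d with
  | _ k ih =>
  by_cases hd : d ∈ chainFree n m r
  · exact Submodule.mem_sup_right (by simp [hd])
  simp only [chainFree, HasChain, Set.mem_ofPred_eq, not_not] at hd
  obtain ⟨R, C, hR, hC, hS⟩ := hd
  -- the diagonal term divides the monomial, the positions of the chain being distinct
  have hle : ∑ i, Finsupp.single (R i, C i) 1 ≤ d := by
    intro p
    rw [Finsupp.finsetSum_apply]
    by_cases hp : ∃ i, (R i, C i) = p
    · obtain ⟨i, rfl⟩ := hp
      rw [Finset.sum_eq_single i]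
      · have := hS i
        simp only [Finset.mem_coe, Finsupp.mem_support_iff] at this
        simp; omega
      · intro j _ hj
        rw [Finsupp.single_apply, if_neg]
        intro h
        exact hj (hR.injective (congrArg Prod.fst h))
      · simp
    · push Not at hp
      rw [Finset.sum_eq_zero]
      · exact Nat.zero_le _
      · intro i _
        rw [Finsupp.single_apply, if_neg (hp i)]
  obtain ⟨e, he⟩ := exists_add_of_le hle
  have hdet : (Matrix.det (Matrix.of fun i j => X (R i, C j)) :
      MvPolynomial (Fin n × Fin m) F) = ∑ σ : Equiv.Perm (Fin r),
        (Equiv.Perm.sign σ : ℤ) • monomial (∑ i, Finsupp.single (R (σ i), C i) 1) (1 : F) := by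
    rw [Matrix.det_apply]
    refine Finset.sum_congr rfl fun σ _ => ?_
    rw [monomial_sum_one]
    rfl
  have hmem : monomial e (1 : F) * Matrix.det (Matrix.of fun i j => X (R i, C j)) ∈
      minorIdeal F n m r :=
    Ideal.mul_mem_left _ _ (Ideal.subset_span ⟨⟨R, hR.injective⟩, ⟨C, hC.injective⟩, rfl⟩)
  rw [hdet, ← Finset.add_sum_erase _ _ (Finset.mem_univ (1 : Equiv.Perm (Fin r))), mul_add] at hmem
  have hd1 : monomial e (1 : F) * ((Equiv.Perm.sign (1 : Equiv.Perm (Fin r)) : ℤ) •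
      monomial (∑ i, Finsupp.single (R ((1 : Equiv.Perm (Fin r)) i), C i) 1) (1 : F)) =
        monomial d 1 := by
    simp [monomial_mul, he, add_comm]
  rw [hd1] at hmem
  have hrest : monomial e (1 : F) * ∑ σ ∈ Finset.univ.erase (1 : Equiv.Perm (Fin r)),
      (Equiv.Perm.sign σ : ℤ) • monomial (∑ i, Finsupp.single (R (σ i), C i) 1) (1 : F) ∈
      (minorIdeal F n m r).restrictScalars F ⊔ restrictSupport F (chainFree n m r) := by
    rw [Finset.mul_sum]
    refine Submodule.sum_mem _ fun σ hσ => ?_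
    rw [mul_smul_comm, monomial_mul, one_mul]
    refine zsmul_mem (ih _ ?_ _ rfl) _
    rw [← hk, he, map_add, map_add, map_sum, map_sum]
    have := weight_perm_lt hR hC (Finset.ne_of_mem_erase hσ)
    omega
  have := Submodule.sub_mem _ (Submodule.mem_sup_left (T := restrictSupport F (chainFree n m r))
    (show _ ∈ (minorIdeal F n m r).restrictScalars F from hmem)) hrest
  simpa using this

theorem exists_reduction {F : Type*} [Field F] {n m : ℕ} (r : ℕ)
    (f : MvPolynomial (Fin n × Fin m) F) :
    ∃ p ∈ minorIdeal F n m r, ∃ q ∈ restrictSupport F (chainFree n m r), p + q = f := by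
  have : f ∈ (minorIdeal F n m r).restrictScalars F ⊔ restrictSupport F (chainFree n m r) := by
    rw [f.as_sum]
    refine Submodule.sum_mem _ fun d _ => ?_
    have := Submodule.smul_mem _ (coeff d f) (monomial_mem F n m r d)
    simpa [smul_monomial] using this
  exact Submodule.mem_sup.1 this

/-! ### Splitting a chain-free set into antichains -/

/-- There is a chain of `k + 1` elements of `S`, strictly increasing in both coordinates, with last
element `p`. -/
def ChainTo {n m : ℕ} (S : Set (Fin n × Fin m)) : ℕ → Fin n × Fin m → Prop
  | 0, p => p ∈ S
  | k + 1, p => p ∈ S ∧ ∃ q, q.1 < p.1 ∧ q.2 < p.2 ∧ ChainTo S k q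

theorem ChainTo.exists_chain {n m : ℕ} {S : Set (Fin n × Fin m)} {k : ℕ} {p : Fin n × Fin m}
    (h : ChainTo S k p) : ∃ (R : Fin (k + 1) → Fin n) (C : Fin (k + 1) → Fin m),
      StrictMono R ∧ StrictMono C ∧ (∀ i, (R i, C i) ∈ S) ∧
        (R (Fin.last k), C (Fin.last k)) = p := by
  induction k generalizing p with
  | zero =>
    refine ⟨fun _ => p.1, fun _ => p.2, Subsingleton.strictMono (α := Fin 1) _,
      Subsingleton.strictMono (α := Fin 1) _, fun _ => h, rfl⟩
  | succ k ih =>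
    obtain ⟨hp, q, h1, h2, hq⟩ := h
    obtain ⟨R, C, hR, hC, hS, rfl⟩ := ih hq
    refine ⟨Fin.snoc (α := fun _ => Fin n) R p.1, Fin.snoc (α := fun _ => Fin m) C p.2, ?_, ?_, ?_, by simp⟩
    · rw [Fin.strictMono_iff_lt_succ]
      intro i
      induction i using Fin.lastCases with
      | last => rw [Fin.succ_last, Fin.snoc_last, Fin.snoc_castSucc]; exact h1
      | cast i => rw [Fin.succ_castSucc, Fin.snoc_castSucc, Fin.snoc_castSucc]; exact hR Fin.castSucc_lt_succ
    · rw [Fin.strictMono_iff_lt_succ]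
      intro i
      induction i using Fin.lastCases with
      | last => rw [Fin.succ_last, Fin.snoc_last, Fin.snoc_castSucc]; exact h2
      | cast i => rw [Fin.succ_castSucc, Fin.snoc_castSucc, Fin.snoc_castSucc]; exact hC Fin.castSucc_lt_succ
    · intro i
      induction i using Fin.lastCases with
      | last => simpa using hp
      | cast i => simpa using hS i

/-- A set without chains of `r + 1` elements splits into the `r` antichains `l = k`, `k < r`: let
`l p` be one less than the largest size of a chain ending at `p`. -/
theorem exists_level {n m r : ℕ} {S : Set (Fin n × Fin m)} (hS : ¬ HasChain (r + 1) S) :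
    ∃ l : Fin n × Fin m → ℕ, (∀ p ∈ S, l p < r) ∧
      ∀ p ∈ S, ∀ q ∈ S, p.1 < q.1 → p.2 < q.2 → l p < l q := by
  classical
  have hno : ∀ p, ¬ ChainTo S r p := by
    intro p hp
    obtain ⟨R, C, hR, hC, h, -⟩ := hp.exists_chain
    exact hS ⟨R, C, hR, hC, h⟩
  have hspec : ∀ p ∈ S, ChainTo S (Nat.findGreatest (fun k => ChainTo S k p) r) p := fun p hp =>
    Nat.findGreatest_spec (P := fun k => ChainTo S k p) (Nat.zero_le r) hp
  have hlt : ∀ p ∈ S, Nat.findGreatest (fun k => ChainTo S k p) r < r := by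
    intro p hp
    refine lt_of_le_of_ne (Nat.findGreatest_le r) fun h => hno p ?_
    have := hspec p hp
    rwa [h] at this
  refine ⟨fun p => Nat.findGreatest (fun k => ChainTo S k p) r, hlt, fun p hp q hq h1 h2 => ?_⟩
  exact Nat.le_findGreatest (P := fun k => ChainTo S k q) (hlt p hp) ⟨hq, p, h1, h2, hspec p hp⟩

/-! ### Degenerating families of low-rank matrices -/

/-- The matrix with entries `a i * b j * s ^ (-(α i + β j))` in the rows and columns met by the
antichain `S`, and `0` elsewhere, has entry `c (i, j) * s ^ (-2ij)` on `S` and smaller poles off `S`.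
Elements of `S` are added in increasing order of `i - j`, so that rows increase and columns decrease
weakly; the inequalities come from `(x - i) * (j - y) > 0` for `i < x` and `y < j`. -/
theorem exists_potential {F : Type*} [Field F] {n m : ℕ} (c : Fin n × Fin m → F)
    (hc : ∀ p, c p ≠ 0) (S : Finset (Fin n × Fin m))
    (hS : ∀ p ∈ S, ∀ q ∈ S, p.1 < q.1 → p.2 < q.2 → False) :
    ∃ (a : Fin n → F) (b : Fin m → F) (α : Fin n → ℤ) (β : Fin m → ℤ),
      (∀ i, a i ≠ 0) ∧ (∀ j, b j ≠ 0) ∧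
      (∀ i j, (i, j) ∈ S → a i * b j = c (i, j) ∧ α i + β j = 2 * (i : ℤ) * (j : ℤ)) ∧
      ∀ i j, i ∈ S.image Prod.fst → j ∈ S.image Prod.snd → (i, j) ∉ S →
        α i + β j < 2 * (i : ℤ) * (j : ℤ) := by
  refine Finset.induction_on_max_value
    (motive := fun S => (∀ p ∈ S, ∀ q ∈ S, p.1 < q.1 → p.2 < q.2 → False) → ∃ (a : Fin n → F) (b : Fin m → F) (α : Fin n → ℤ) (β : Fin m → ℤ),
      (∀ i, a i ≠ 0) ∧ (∀ j, b j ≠ 0) ∧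
      (∀ i j, (i, j) ∈ S → a i * b j = c (i, j) ∧ α i + β j = 2 * (i : ℤ) * (j : ℤ)) ∧
      ∀ i j, i ∈ S.image Prod.fst → j ∈ S.image Prod.snd → (i, j) ∉ S →
        α i + β j < 2 * (i : ℤ) * (j : ℤ))
    (fun p : Fin n × Fin m => ((p.1 : ℕ) : ℤ) - ((p.2 : ℕ) : ℤ)) S ?_ ?_ hS
  · exact fun _ => ⟨1, 1, 0, 0, by simp, by simp, by simp, by simp⟩
  · clear hS S
    intro x S hx hmax ih hS
    obtain ⟨x, y⟩ := x
    obtain ⟨a, b, α, β, ha, hb, heq, hlt⟩ := ih fun p hp q hq =>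
      hS p (Finset.mem_insert_of_mem hp) q (Finset.mem_insert_of_mem hq)
    have hord : ∀ i j, (i, j) ∈ S → i ≤ x ∧ y ≤ j := by
      intro i j hij
      have h1 : ¬(i < x ∧ j < y) := fun h =>
        hS _ (Finset.mem_insert_of_mem hij) _ (Finset.mem_insert_self _ _) h.1 h.2
      have h2 : ¬(x < i ∧ y < j) := fun h =>
        hS _ (Finset.mem_insert_self _ _) _ (Finset.mem_insert_of_mem hij) h.1 h.2
      have h3 := hmax _ hij
      simp only [Fin.lt_def, Fin.le_def] at *
      omega
    have hle : ∀ i j, i ∈ S.image Prod.fst → j ∈ S.image Prod.snd →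
        α i + β j ≤ 2 * (i : ℤ) * (j : ℤ) := by
      intro i j hi hj
      by_cases h : (i, j) ∈ S
      · exact (heq i j h).2.le
      · exact (hlt i j hi hj h).le
    have hrow : ∀ i ∈ S.image Prod.fst, i ≤ x := by
      simp only [Finset.mem_image]
      rintro _ ⟨p, hp, rfl⟩
      exact (hord _ _ hp).1
    have hcol : ∀ j ∈ S.image Prod.snd, y ≤ j := by
      simp only [Finset.mem_image]
      rintro _ ⟨p, hp, rfl⟩
      exact (hord _ _ hp).2
    -- It suffices to choose the coefficients and exponents at row `x` and column `y`,
    -- keeping the old ones where `S` already meets that row or column.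
    suffices h : ∃ (ax : F) (bY : F) (αx βy : ℤ), ax ≠ 0 ∧ bY ≠ 0 ∧
        (x ∈ S.image Prod.fst → ax = a x ∧ αx = α x) ∧
        (y ∈ S.image Prod.snd → bY = b y ∧ βy = β y) ∧
        ax * bY = c (x, y) ∧ αx + βy = 2 * (x : ℤ) * (y : ℤ) ∧
        (x ∉ S.image Prod.fst → ∀ j ∈ S.image Prod.snd, j ≠ y →
          αx + β j < 2 * (x : ℤ) * (j : ℤ)) ∧
        (y ∉ S.image Prod.snd → ∀ i ∈ S.image Prod.fst, i ≠ x →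
          α i + βy < 2 * (i : ℤ) * (y : ℤ)) by
      obtain ⟨ax, bY, αx, βy, hax, hbY, hx1, hy1, hprod, hsum, hxlt, hylt⟩ := h
      have ea : ∀ i ∈ S.image Prod.fst,
          Function.update a x ax i = a i ∧ Function.update α x αx i = α i := by
        intro i hi
        by_cases h : i = x
        · subst h; simpa using hx1 hi
        · simp [h]
      have eb : ∀ j ∈ S.image Prod.snd,
          Function.update b y bY j = b j ∧ Function.update β y βy j = β j := by
        intro j hj
        by_cases h : j = y
        · subst h; simpa using hy1 hj
        · simp [h]
      refine ⟨Function.update a x ax, Function.update b y bY, Function.update α x αx,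
        Function.update β y βy, ?_, ?_, ?_, ?_⟩
      · intro i
        by_cases h : i = x
        · subst h; simpa using hax
        · simpa [h] using ha i
      · intro j
        by_cases h : j = y
        · subst h; simpa using hbY
        · simpa [h] using hb j
      · intro i j hij
        rcases Finset.mem_insert.1 hij with h | h
        · obtain ⟨rfl, rfl⟩ := Prod.mk.inj h
          simpa using ⟨hprod, hsum⟩
        · have hi := ea i (Finset.mem_image_of_mem Prod.fst h)
          have hj := eb j (Finset.mem_image_of_mem Prod.snd h)
          rw [hi.1, hi.2, hj.1, hj.2]
          exact heq i j h
      · intro i j hi hj hij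
        rw [Finset.image_insert, Finset.mem_insert] at hi hj
        rw [Finset.mem_insert, not_or] at hij
        by_cases hi' : i ∈ S.image Prod.fst <;> by_cases hj' : j ∈ S.image Prod.snd
        · rw [(ea i hi').2, (eb j hj').2]
          exact hlt i j hi' hj' hij.2
        · obtain rfl : j = y := hj.resolve_right hj'
          rw [(ea i hi').2, Function.update_self]
          exact hylt hj' i hi' fun h => hij.1 (by rw [h])
        · obtain rfl : i = x := hi.resolve_right hi'
          rw [(eb j hj').2, Function.update_self]
          exact hxlt hi' j hj' fun h => hij.1 (by rw [h])
        · exact absurd (by rw [hi.resolve_right hi', hj.resolve_right hj']) hij.1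
    have hlt_row : ∀ i ∈ S.image Prod.fst, i ≠ x → (i : ℤ) + 1 ≤ x := by
      intro i hi hne
      have h1 := hrow i hi
      have h2 : (i : ℕ) ≠ x := fun h => hne (Fin.ext h)
      have h3 : (i : ℕ) ≤ x := h1
      omega
    have hlt_col : ∀ j ∈ S.image Prod.snd, j ≠ y → (y : ℤ) + 1 ≤ j := by
      intro j hj hne
      have h1 := hcol j hj
      have h2 : (j : ℕ) ≠ y := fun h => hne (Fin.ext h)
      have h3 : (y : ℕ) ≤ j := h1
      omega
    have hcxy := hc (x, y)
    by_cases hxr : x ∈ S.image Prod.fst <;> by_cases hyc : y ∈ S.image Prod.snd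
    · exfalso
      -- elements `(x, j)` and `(i, y)` of `S` would be comparable
      obtain ⟨⟨x', j⟩, hj, rfl⟩ := Finset.mem_image.1 hxr
      obtain ⟨⟨i, y'⟩, hi, rfl⟩ := Finset.mem_image.1 hyc
      have h1 : i ≠ x' := by rintro rfl; exact hx hi
      have h2 : j ≠ y' := by rintro rfl; exact hx hj
      exact hS _ (Finset.mem_insert_of_mem hi) _ (Finset.mem_insert_of_mem hj)
        (lt_of_le_of_ne (hord _ _ hi).1 h1) (lt_of_le_of_ne (hord _ _ hj).2 h2.symm)
    · refine ⟨a x, c (x, y) / a x, α x, 2 * (x : ℤ) * (y : ℤ) - α x, ha x,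
        div_ne_zero hcxy (ha x), fun _ => ⟨rfl, rfl⟩, fun h => absurd h hyc,
        mul_div_cancel₀ _ (ha x), by ring, fun h => absurd hxr h, fun _ i hi hix => ?_⟩
      obtain ⟨⟨x', j⟩, hj, rfl⟩ := Finset.mem_image.1 hxr
      have hjc : j ∈ S.image Prod.snd := Finset.mem_image_of_mem Prod.snd hj
      have h1 := hle i j hi hjc
      have h2 := (heq _ _ hj).2
      have h3 := hlt_row i hi hix
      have h4 := hlt_col j hjc (by rintro rfl; exact hx hj)
      dsimp only at *
      nlinarith [mul_nonneg (sub_nonneg.2 h3) (sub_nonneg.2 h4)]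
    · refine ⟨c (x, y) / b y, b y, 2 * (x : ℤ) * (y : ℤ) - β y, β y, div_ne_zero hcxy (hb y),
        hb y, fun h => absurd h hxr, fun _ => ⟨rfl, rfl⟩,
        div_mul_cancel₀ _ (hb y), by ring, fun _ j hj hjy => ?_, fun h => absurd hyc h⟩
      obtain ⟨⟨i, y'⟩, hi, rfl⟩ := Finset.mem_image.1 hyc
      have hir : i ∈ S.image Prod.fst := Finset.mem_image_of_mem Prod.fst hi
      have h1 := hle i j hir hj
      have h2 := (heq _ _ hi).2
      have h3 := hlt_row i hir (by rintro rfl; exact hx hi)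
      have h4 := hlt_col j hj hjy
      dsimp only at *
      nlinarith [mul_nonneg (sub_nonneg.2 h3) (sub_nonneg.2 h4)]
    -- The lower bounds on `αx` imposed by the rows of `S` and the upper bounds imposed by its
    -- columns differ by at least `2`, so one more than the largest lower bound works.
    · obtain ⟨αx, hα1, hα2⟩ : ∃ αx : ℤ,
          (∀ i ∈ S.image Prod.fst, α i + 2 * ((x : ℤ) - i) * y < αx) ∧
          ∀ j ∈ S.image Prod.snd, αx + β j < 2 * (x : ℤ) * (j : ℤ) := by
        rcases S.eq_empty_or_nonempty with rfl | hne
        · exact ⟨0, by simp, by simp⟩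
        obtain ⟨i₀, hi₀, hmax₀⟩ := Finset.exists_max_image (S.image Prod.fst)
          (fun i => α i + 2 * ((x : ℤ) - i) * y) (hne.image _)
        refine ⟨α i₀ + 2 * ((x : ℤ) - i₀) * y + 1,
          fun i hi => Int.lt_add_one_of_le (hmax₀ i hi), fun j hj => ?_⟩
        have h1 := hle i₀ j hi₀ hj
        have h3 := hlt_row i₀ hi₀ (by rintro rfl; exact hxr hi₀)
        have h4 := hlt_col j hj (by rintro rfl; exact hyc hj)
        nlinarith [mul_nonneg (sub_nonneg.2 h3) (sub_nonneg.2 h4)]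
      refine ⟨c (x, y), 1, αx, 2 * (x : ℤ) * (y : ℤ) - αx, hcxy, one_ne_zero,
        fun h => absurd h hxr, fun h => absurd h hyc, mul_one _, by ring,
        fun _ j hj _ => hα2 j hj, fun _ i hi _ => ?_⟩
      have := hα1 i hi
      linarith

/-- A family of matrices of rank at most `ρ` whose rescalings by `s ^ (2ij)` are polynomial in `s` and
tend to the matrix with entries `c` on `S` and `0` off `S`. -/
theorem exists_family {F : Type*} [Field F] {n m ρ : ℕ} (S : Finset (Fin n × Fin m))
    (hS : ¬ HasChain (ρ + 1) (S : Set (Fin n × Fin m))) (c : Fin n × Fin m → F)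
    (hc : ∀ p, c p ≠ 0) :
    ∃ P : Fin n × Fin m → Polynomial F,
      (∀ p, (P p).eval 0 = if p ∈ S then c p else 0) ∧
      ∀ s : F, s ≠ 0 → ∃ A : Matrix (Fin n) (Fin m) F, A.rank ≤ ρ ∧
        ∀ p : Fin n × Fin m, s ^ (2 * (p.1 : ℕ) * (p.2 : ℕ)) * A p.1 p.2 = (P p).eval s := by
  classical
  obtain ⟨l, hl, hmono⟩ := exists_level hS
  -- the antichain of elements of level `k`
  let T : Fin ρ → Finset (Fin n × Fin m) := fun k => S.filter fun p => l p = k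
  have hpot := fun k : Fin ρ => exists_potential c hc (T k) (by
    intro p hp q hq h1 h2
    have hp' := Finset.mem_filter.1 hp
    have hq' := Finset.mem_filter.1 hq
    have := hmono p hp'.1 q hq'.1 h1 h2
    omega)
  choose a b α β ha hb heq hlt using hpot
  let used : Fin ρ → Fin n × Fin m → Prop := fun k p =>
    p.1 ∈ (T k).image Prod.fst ∧ p.2 ∈ (T k).image Prod.snd
  have hused : ∀ k p, p ∈ T k → used k p := fun k p hp =>
    ⟨Finset.mem_image_of_mem _ hp, Finset.mem_image_of_mem _ hp⟩
  have hnonneg : ∀ k p, used k p → 0 ≤ 2 * (p.1 : ℤ) * (p.2 : ℤ) - α k p.1 - β k p.2 := by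
    intro k p hp
    by_cases h : p ∈ T k
    · have := (heq k p.1 p.2 h).2
      omega
    · have := hlt k p.1 p.2 hp.1 hp.2 h
      omega
  refine ⟨fun p => ∑ k, if used k p then Polynomial.C (a k p.1 * b k p.2) *
      Polynomial.X ^ (2 * (p.1 : ℤ) * (p.2 : ℤ) - α k p.1 - β k p.2).toNat else 0, ?_, ?_⟩
  · intro p
    have hterm : ∀ k, (if used k p then Polynomial.C (a k p.1 * b k p.2) *
        Polynomial.X ^ (2 * (p.1 : ℤ) * (p.2 : ℤ) - α k p.1 - β k p.2).toNat
        else (0 : Polynomial F)).eval 0 = if p ∈ T k then c p else 0 := by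
      intro k
      by_cases hu : used k p
      · by_cases h : p ∈ T k
        · obtain ⟨h1, h2⟩ := heq k p.1 p.2 h
          rw [if_pos hu, if_pos h, h1]
          have : 2 * (p.1 : ℤ) * (p.2 : ℤ) - α k p.1 - β k p.2 = 0 := by omega
          simp [this]
        · have h2 := hlt k p.1 p.2 hu.1 hu.2 h
          rw [if_pos hu, if_neg h]
          have : (2 * (p.1 : ℤ) * (p.2 : ℤ) - α k p.1 - β k p.2).toNat ≠ 0 := by omega
          simp [this]
      · rw [if_neg hu, if_neg fun h => hu (hused k p h)]
        simp
    rw [Polynomial.eval_finsetSum, Finset.sum_congr rfl fun k _ => hterm k]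
    by_cases h : p ∈ S
    · rw [if_pos h, Finset.sum_eq_single ⟨l p, hl p h⟩]
      · simp [T, h]
      · intro k _ hk
        rw [if_neg]
        intro h'
        exact hk (Fin.ext (Finset.mem_filter.1 h').2.symm)
      · simp
    · rw [if_neg h]
      refine Finset.sum_eq_zero fun k _ => if_neg fun h' => h (Finset.mem_filter.1 h').1
  · intro s hs
    -- the `k`-th column of `Y` and the `k`-th row of `Z` give the summand of the `k`-th antichain
    let Y : Matrix (Fin n) (Fin ρ) F := fun i k =>
      if i ∈ (T k).image Prod.fst then a k i * s ^ (-α k i) else 0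
    let Z : Matrix (Fin ρ) (Fin m) F := fun k j =>
      if j ∈ (T k).image Prod.snd then b k j * s ^ (-β k j) else 0
    refine ⟨Y * Z, (Matrix.rank_mul_le_left Y Z).trans (Matrix.rank_le_width Y), fun p => ?_⟩
    rw [Matrix.mul_apply, Finset.mul_sum, Polynomial.eval_finsetSum]
    refine Finset.sum_congr rfl fun k _ => ?_
    by_cases hu : used k p
    · have hN := Int.toNat_of_nonneg (hnonneg k p hu)
      have hpow : s ^ (2 * (p.1 : ℤ) * (p.2 : ℤ) - α k p.1 - β k p.2).toNat =
          s ^ (2 * (p.1 : ℕ) * (p.2 : ℕ)) * s ^ (-α k p.1) * s ^ (-β k p.2) := by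
        rw [← zpow_natCast, hN, ← zpow_natCast, ← zpow_add₀ hs, ← zpow_add₀ hs]
        congr 1
      have hY : Y p.1 k = a k p.1 * s ^ (-α k p.1) := if_pos hu.1
      have hZ : Z k p.2 = b k p.2 * s ^ (-β k p.2) := if_pos hu.2
      rw [if_pos hu, hY, hZ, Polynomial.eval_mul, Polynomial.eval_C, Polynomial.eval_pow,
        Polynomial.eval_X, hpow]
      ring
    · rw [if_neg hu, Polynomial.eval_zero]
      have : Y p.1 k * Z k p.2 = 0 := by
        by_cases h1 : p.1 ∈ (T k).image Prod.fst
        · have h2 : p.2 ∉ (T k).image Prod.snd := fun h2 => hu ⟨h1, h2⟩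
          rw [show Z k p.2 = 0 from if_neg h2, mul_zero]
        · rw [show Y p.1 k = 0 from if_neg h1, zero_mul]
      rw [this, mul_zero]

/-! ### Independence of the chain-free monomials -/

theorem exists_eval_ne_zero_of_forall_ne_zero {F σ : Type*} [Field F] [Infinite F]
    {g : MvPolynomial σ F} (hg : g ≠ 0) : ∃ c : σ → F, (∀ p, c p ≠ 0) ∧ eval c g ≠ 0 := by
  by_contra! h
  refine hg (MvPolynomial.funext_set (fun _ => {x : F | x ≠ 0}) (fun _ => ?_) fun c hc => ?_)
  · exact (Set.finite_singleton (0 : F)).infinite_compl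
  · rw [h c fun p => hc p trivial, map_zero]

/-- Chain-free monomials are linearly independent as functions on the matrices of rank at most `ρ`. -/
theorem eq_zero_of_chainFree {F : Type*} [Field F] [Infinite F] {n m ρ : ℕ}
    {q : MvPolynomial (Fin n × Fin m) F} (hq : q ∈ restrictSupport F (chainFree n m (ρ + 1)))
    (hvan : ∀ A : Matrix (Fin n) (Fin m) F, A.rank ≤ ρ →
      eval (fun p : Fin n × Fin m => A p.1 p.2) q = 0) : q = 0 := by
  classical
  by_contra hne
  obtain ⟨d₀, hd₀, hmax⟩ := Finset.exists_max_image q.support wt (support_nonempty.2 hne)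
  set S := d₀.support with hS
  -- the part of the top weight component of `q` that survives setting variables off `S` to `0`
  let g : MvPolynomial (Fin n × Fin m) F :=
    ∑ d ∈ q.support with wt d = wt d₀ ∧ d.support ⊆ S, monomial d (coeff d q)
  have hg : g ≠ 0 := by
    intro h
    have h1 : coeff d₀ g = coeff d₀ q := by
      simp only [g, coeff_sum, coeff_monomial]
      rw [Finset.sum_ite_eq' , if_pos (by simp [hS, mem_support_iff.1 hd₀])]
    rw [h, coeff_zero] at h1
    exact mem_support_iff.1 hd₀ h1.symm
  obtain ⟨c, hc, hgc⟩ := exists_eval_ne_zero_of_forall_ne_zero hg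
  obtain ⟨P, hP0, hP⟩ := exists_family S ((mem_restrictSupport_iff F).1 hq hd₀) c hc
  -- `s ^ wt d₀` times the value of `q` at the family; its constant term is `eval c g`
  let Q : Polynomial F := ∑ d ∈ q.support, Polynomial.C (coeff d q) *
    Polynomial.X ^ (wt d₀ - wt d) * ∏ p, P p ^ d p
  have hQs : ∀ s : F, s ≠ 0 → Q.eval s = 0 := by
    intro s hs
    obtain ⟨A, hA, hAP⟩ := hP s hs
    have h := congrArg (s ^ wt d₀ * ·) (hvan A hA)
    simp only [mul_zero] at h
    rw [← h, eval_eq', Finset.mul_sum, Polynomial.eval_finsetSum]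
    refine Finset.sum_congr rfl fun d hd => ?_
    have hw : s ^ wt d = ∏ p : Fin n × Fin m, (s ^ (2 * (p.1 : ℕ) * (p.2 : ℕ))) ^ d p := by
      rw [wt, Finsupp.weight_apply, Finsupp.sum_fintype _ _ (by simp), ← Finset.prod_pow_eq_pow_sum]
      refine Finset.prod_congr rfl fun p _ => ?_
      rw [← pow_mul, smul_eq_mul, mul_comm (d p)]
    have hsplit : s ^ wt d₀ = s ^ (wt d₀ - wt d) * s ^ wt d := by
      rw [← pow_add, Nat.sub_add_cancel (hmax d hd)]
    rw [hsplit, hw]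
    simp only [Polynomial.eval_mul, Polynomial.eval_C, Polynomial.eval_pow, Polynomial.eval_X,
      Polynomial.eval_prod, ← hAP, mul_pow, Finset.prod_mul_distrib]
    ring
  have hQ : Q = 0 := by
    refine Polynomial.eq_zero_of_infinite_isRoot Q ?_
    exact (Set.finite_singleton (0 : F)).infinite_compl.mono fun s hs => hQs s hs
  apply hgc
  have hQ0 : Q.eval 0 = 0 := by rw [hQ, Polynomial.eval_zero]
  rw [← hQ0, Polynomial.eval_finsetSum, map_sum, Finset.sum_filter]
  refine Finset.sum_congr rfl fun d hd => ?_
  simp only [Polynomial.eval_mul, Polynomial.eval_C, Polynomial.eval_pow, Polynomial.eval_X,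
      Polynomial.eval_prod, hP0]
  by_cases hw : wt d = wt d₀
  · by_cases hsub : d.support ⊆ S
    · rw [if_pos ⟨hw, hsub⟩, hw, Nat.sub_self, pow_zero, mul_one, eval_monomial,
        Finsupp.prod_fintype _ _ (by simp)]
      congr 1
      refine Finset.prod_congr rfl fun p _ => ?_
      by_cases hp : p ∈ S
      · rw [if_pos hp]
      · rw [Finsupp.notMem_support_iff.1 fun h => hp (hsub h), pow_zero, pow_zero]
    · rw [if_neg fun h => hsub h.2]
      obtain ⟨p, hp, hpS⟩ := Finset.not_subset.1 hsub
      rw [Finset.prod_eq_zero (Finset.mem_univ p), mul_zero]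
      rw [if_neg hpS, zero_pow (Finsupp.mem_support_iff.1 hp)]
  · have hlt := lt_of_le_of_ne (hmax d hd) hw
    rw [if_neg fun h => hw h.1, zero_pow (by omega), mul_zero, zero_mul]

end DetIdeal

/-- Over an algebraically closed field, a polynomial in the entries of an
n×m matrix of variables vanishes on all matrices of rank at most r−1 if and only if it
lies in the ideal generated by the r×r minors of the generic matrix. -/
theorem vanish_on_low_rank_iff_mem_determinantal_ideal
    (F : Type*) [Field F] [IsAlgClosed F] (n m r : ℕ)
    (hr : 1 ≤ r) (hrn : r ≤ n) (hrm : r ≤ m)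
    (f : MvPolynomial (Fin n × Fin m) F) :
    (∀ A : Matrix (Fin n) (Fin m) F, A.rank ≤ r - 1 →
        MvPolynomial.eval (fun p : Fin n × Fin m => A p.1 p.2) f = 0) ↔
      f ∈ Ideal.span { p : MvPolynomial (Fin n × Fin m) F |
        ∃ (R : Fin r ↪ Fin n) (C : Fin r ↪ Fin m),
          p = Matrix.det (Matrix.of fun i j => MvPolynomial.X (R i, C j)) } := by
  refine ⟨fun hf => ?_, fun hf A hA => DetIdeal.eval_eq_zero_of_mem hr hf A hA⟩
  have : Infinite F := inferInstance
  obtain ⟨p, hp, q, hq, rfl⟩ := DetIdeal.exists_reduction r f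
  obtain ⟨ρ, rfl⟩ : ∃ ρ, r = ρ + 1 := ⟨r - 1, by omega⟩
  have hq0 : q = 0 := DetIdeal.eq_zero_of_chainFree hq fun A hA => by
    have h := hf A hA
    rwa [map_add, DetIdeal.eval_eq_zero_of_mem hr hp A hA, zero_add] at h
  rw [hq0, add_zero]
  exact hp
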